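/- Let F ∈ R^{l×l}, let f ∈ K[z_2, …, z_n], and suppose (z_1 − f) divides det(F). Assume that for some k with 1 ≤ k < l the k×k minors of F have gcd 1 (i.e. d_k(F) = 1 up to a unit), J_k(F) = R, and (z_1 − f) divides d_{k+1}(F). Let F_1 ∈ K[z_2, …, z_n]^{l×l} be the matrix obtained from F by substituting z_1 ↦ f in every entry. Then F_1 has rank exactly k, and the k×k minors of F_1 generate the unit ideal of K[z_2, …, z_n]. -/

import Mathlib

open MvPolynomial Matrix

section Defs

variable {A : Type*} [CommRing A]

/-- The set of all `k × k` minors of a matrix. -/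
def minorsSet {l m : ℕ} (F : Matrix (Fin l) (Fin m) A) (k : ℕ) : Set A :=
  { p | ∃ (r : Fin k ↪ Fin l) (c : Fin k ↪ Fin m), p = (F.submatrix ⇑r ⇑c).det }

/-- `d` is a greatest common divisor of the `k × k` minors of `F`. -/
def IsGcdMinors {l m : ℕ} (F : Matrix (Fin l) (Fin m) A) (k : ℕ) (d : A) : Prop :=
  (∀ p ∈ minorsSet F k, d ∣ p) ∧ ∀ e : A, (∀ p ∈ minorsSet F k, e ∣ p) → e ∣ d

/-- The ideal generated by the `k × k` reduced minors of `F`, relative to a gcd `d`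
of the `k × k` minors (the reduced minors are the `v` with `d * v` a minor). -/
def reducedIdeal {l m : ℕ} (F : Matrix (Fin l) (Fin m) A) (k : ℕ) (d : A) : Ideal A :=
  Ideal.span { v : A | d * v ∈ minorsSet F k }

/-- `J_k(F) = R`: the `k × k` reduced minors of `F` generate the unit ideal. -/
def JkUnit {l m : ℕ} (F : Matrix (Fin l) (Fin m) A) (k : ℕ) : Prop :=
  ∃ d : A, IsGcdMinors F k d ∧ reducedIdeal F k d = ⊤

/-- `F` has rank `r`: some `r × r` minor is nonzero and all `(r+1) × (r+1)` minors vanish. -/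
def HasRank {l m : ℕ} (F : Matrix (Fin l) (Fin m) A) (r : ℕ) : Prop :=
  (∃ p ∈ minorsSet F r, p ≠ 0) ∧ ∀ p ∈ minorsSet F (r + 1), p = 0

/-- Equivalence of matrices: `F₁ = U * F₂ * V` for unimodular `U`, `V`. -/
def MatEquiv {l m : ℕ} (F₁ F₂ : Matrix (Fin l) (Fin m) A) : Prop :=
  ∃ (U : Matrix (Fin l) (Fin l) A) (V : Matrix (Fin m) (Fin m) A),
    IsUnit U.det ∧ IsUnit V.det ∧ F₁ = U * F₂ * V

/-- The rectangular diagonal matrix with diagonal entries `Φ`. -/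
def smithDiag {l m : ℕ} (Φ : Fin l → A) : Matrix (Fin l) (Fin m) A :=
  Matrix.of fun i j => if (i : ℕ) = (j : ℕ) then Φ i else 0

/-- `F` (of rank `r`) is equivalent to its Smith form: there are diagonal entries `Φ` such that
for each `i ≤ r` the product `Φ_1 ⋯ Φ_i` is a gcd of the `i × i` minors of `F`
(i.e. `Φ_i = d_i(F)/d_{i-1}(F)`), `Φ_i = 0` for `i > r`, and `F` is equivalent to
the diagonal matrix with entries `Φ`. -/
def SmithEquivAt {l m : ℕ} (F : Matrix (Fin l) (Fin m) A) (r : ℕ) : Prop :=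
  ∃ Φ : Fin l → A,
    (∀ i : Fin l, (i : ℕ) < r →
      IsGcdMinors F ((i : ℕ) + 1) (∏ j ∈ Finset.Iic i, Φ j)) ∧
    (∀ i : Fin l, r ≤ (i : ℕ) → Φ i = 0) ∧
    MatEquiv F (smithDiag Φ)

/-- `F` is equivalent to its Smith form. -/
def EquivToSmith {l m : ℕ} (F : Matrix (Fin l) (Fin m) A) : Prop :=
  ∃ r : ℕ, HasRank F r ∧ SmithEquivAt F r

end Defs

/-!
The substitution `φ : z₁ ↦ f` fixes `f`, so it kills `z₁ - f` and hence every
`(k + 1) × (k + 1)` minor of `F`. Being a ring homomorphism, it commutes with minors and carries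
the relation expressing `1` through the `k × k` minors of `F` to such a relation for `φ(F)`;
in particular the `k × k` minors of `φ(F)` do not all vanish.

The same argument eliminates any set of variables at once: `s` is the set of variables that are
kept, and `z_t ↦ g t` for all `t`, where `g t` is a polynomial in the kept variables, equal to
`z_t` if `t` is in `s`.
-/

section Minors

variable {A B : Type*} [CommRing A] [CommRing B] {l m k : ℕ}
  {Φ : Type*} [FunLike Φ A B] [RingHomClass Φ A B]

theorem reducedIdeal_one (F : Matrix (Fin l) (Fin m) A) (k : ℕ) :
    reducedIdeal F k 1 = Ideal.span (minorsSet F k) := by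
  simp only [reducedIdeal, one_mul, Set.ofPred_mem_eq]

theorem minorsSet_map (φ : Φ) (F : Matrix (Fin l) (Fin m) A) (k : ℕ) :
    minorsSet (F.map φ) k = φ '' minorsSet F k := by
  have det_map (r : Fin k ↪ Fin l) (c : Fin k ↪ Fin m) :
      ((F.map φ).submatrix r c).det = φ (F.submatrix r c).det :=
    ((φ : A →+* B).map_det (F.submatrix r c)).symm
  ext p
  constructor
  · rintro ⟨r, c, rfl⟩
    exact ⟨_, ⟨r, c, rfl⟩, (det_map r c).symm⟩
  · rintro ⟨_, ⟨r, c, rfl⟩, rfl⟩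
    exact ⟨r, c, (det_map r c).symm⟩

theorem span_minorsSet_map (φ : Φ) (F : Matrix (Fin l) (Fin m) A) (k : ℕ) :
    Ideal.span (minorsSet (F.map φ) k) = (Ideal.span (minorsSet F k)).map φ := by
  rw [minorsSet_map, Ideal.map_span]

theorem hasRank_of_span_minorsSet_eq_top [Nontrivial A] {F : Matrix (Fin l) (Fin m) A}
    (hspan : Ideal.span (minorsSet F k) = ⊤) (hzero : ∀ p ∈ minorsSet F (k + 1), p = 0) :
    HasRank F k := by
  refine ⟨?_, hzero⟩
  by_contra! hvanish
  exact bot_ne_top ((Ideal.span_eq_bot.2 hvanish).symm.trans hspan)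

theorem hasRank_map_of_minorsSet_subset_ker [Nontrivial B] (φ : Φ)
    {F : Matrix (Fin l) (Fin m) A} (hspan : Ideal.span (minorsSet F k) = ⊤)
    (hker : minorsSet F (k + 1) ⊆ RingHom.ker φ) : HasRank (F.map φ) k := by
  refine hasRank_of_span_minorsSet_eq_top ?_ ?_
  · rw [span_minorsSet_map, hspan, Ideal.map_top]
  · rw [minorsSet_map]
    exact Set.forall_mem_image.2 hker

end Minors

section Substitution

variable {σ R : Type*} {s : Set σ}

section Semiring

variable [CommSemiring R] {g : σ → MvPolynomial σ R}

theorem aeval_mem_of_forall_mem {A : Type*} [CommSemiring A] [Algebra R A] {S : Subalgebra R A}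
    {g : σ → A} (hg : ∀ t, g t ∈ S) (p : MvPolynomial σ R) : aeval g p ∈ S := by
  have hrange : (aeval g).range ≤ S := by
    rw [aeval_range]
    exact Algebra.adjoin_le (Set.range_subset_iff.2 hg)
  exact hrange ⟨p, rfl⟩

theorem aeval_eq_self_of_mem_supported (hgX : ∀ t ∈ s, g t = X t) {p : MvPolynomial σ R}
    (hp : p ∈ supported R s) : aeval g p = p := by
  have heq : Set.EqOn (aeval g) (AlgHom.id R (MvPolynomial σ R)) (X '' s) :=
    Set.forall_mem_image.2 fun t ht => (aeval_X g t).trans (hgX t ht)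
  exact AlgHom.adjoin_le_equalizer _ _ heq hp

end Semiring

variable [CommRing R] {g : σ → MvPolynomial σ R}

theorem span_range_X_sub_le_ker_aeval (hgs : ∀ t, g t ∈ supported R s)
    (hgX : ∀ t ∈ s, g t = X t) :
    Ideal.span (Set.range fun t => X t - g t) ≤ RingHom.ker (aeval g) := by
  rw [Ideal.span_le, Set.range_subset_iff]
  intro t
  rw [SetLike.mem_coe, RingHom.mem_ker, map_sub, aeval_X,
    aeval_eq_self_of_mem_supported hgX (hgs t), sub_self]

theorem statement9_general [Nontrivial R] (hgs : ∀ t, g t ∈ supported R s)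
    (hgX : ∀ t ∈ s, g t = X t) {l m k : ℕ} (F : Matrix (Fin l) (Fin m) (MvPolynomial σ R))
    (hk : Ideal.span (minorsSet F k) = ⊤)
    (hk_succ : ∀ p ∈ minorsSet F (k + 1), p ∈ Ideal.span (Set.range fun t => X t - g t)) :
    (∀ i j, F.map (aeval g) i j ∈ supported R s) ∧
    HasRank (F.map (aeval g)) k ∧
    Ideal.span (minorsSet (F.map (aeval g)) k) = ⊤ := by
  refine ⟨fun i j => aeval_mem_of_forall_mem hgs (F i j), ?_, ?_⟩
  · exact hasRank_map_of_minorsSet_subset_ker (aeval g) hk fun p hp =>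
      span_range_X_sub_le_ker_aeval hgs hgX (hk_succ p hp)
  · rw [span_minorsSet_map, hk, Ideal.map_top]

end Substitution

/-- `F₁` is obtained from `F` by the substitution `z_1 ↦ f` (the `K`-algebra
endomorphism sending `z_1` to `f` and fixing the other variables), applied entrywise.
Its entries lie in the subring `K[z_2,…,z_n]`, and (since `z_1 ↦ f` retracts `R` onto this
subring) the `k × k` minors of `F₁` generate the unit ideal of `K[z_2,…,z_n]` if and only
if they generate the unit ideal of `R`; the latter is how it is stated here. -/
theorem statement9 {K : Type*} [Field K] (n : ℕ) (hn : 2 ≤ n) (l : ℕ)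
    (F : Matrix (Fin l) (Fin l) (MvPolynomial (Fin n) K))
    (f : MvPolynomial (Fin n) K)
    (hf : f ∈ MvPolynomial.supported K {t : Fin n | (t : ℕ) ≠ 0})
    (hdvd : (MvPolynomial.X (⟨0, by omega⟩ : Fin n) - f) ∣ F.det)
    (k : ℕ) (hk1 : 1 ≤ k) (hkl : k < l)
    (hdk : IsGcdMinors F k 1)
    (hJk : reducedIdeal F k 1 = ⊤)
    (hdk1 : ∃ d : MvPolynomial (Fin n) K, IsGcdMinors F (k + 1) d ∧
      (MvPolynomial.X (⟨0, by omega⟩ : Fin n) - f) ∣ d)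
    (F₁ : Matrix (Fin l) (Fin l) (MvPolynomial (Fin n) K))
    (hF₁ : F₁ = F.map fun p => MvPolynomial.aeval
      (fun t : Fin n => if (t : ℕ) = 0 then f else MvPolynomial.X t) p) :
    (∀ i i' : Fin l, F₁ i i' ∈ MvPolynomial.supported K {t : Fin n | (t : ℕ) ≠ 0}) ∧
    HasRank F₁ k ∧
    Ideal.span (minorsSet F₁ k) = ⊤ := by
  obtain ⟨d, hd, hXd⟩ := hdk1
  subst hF₁
  rw [reducedIdeal_one] at hJk
  refine statement9_general (fun t => ?_) (fun t ht => if_neg ht) F hJk fun p hp => ?_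
  · split_ifs with ht
    exacts [hf, X_mem_supported.2 ht]
  · exact Ideal.mem_of_dvd _ (hXd.trans (hd.1 p hp)) (Ideal.subset_span ⟨⟨0, by omega⟩, rfl⟩)
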